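/- arXiv:1803.06339 — 2 statements merged into one kernel-verified Lean document; each statement's English description precedes it below -/
import Mathlib

section
/- (Abstract form of Theorem 3.6, well-posedness for a symmetric form.) For every F ∈ X' there exists a unique u ∈ V such that b(u, v) = F(v) for all v ∈ X, and this solution satisfies the a priori estimate ‖u‖_V ≤ c_s⁻¹ ‖F‖_{X'}, where c_s = √2·γ / (2·(1 + Γ²)). -/
open scoped InnerProductSpace

/-!
The form `A` is deformed into a multiple of the inner product, for which the problem is solvable,
by the method of continuity. Along the segment joining two coercive forms the operators
`u ↦ D u + B (ι u)` stay bounded below by a common constant, because `D` is monotone. By Banach's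
fixed point theorem, applied in `X` rather than in `V`, surjectivity then survives every
perturbation of `B` smaller than that constant, hence it spreads over the whole segment.
Testing the equation with `ι u` bounds `‖ι u‖`, the equation itself then bounds `‖D u‖`, and the
resulting estimate also gives uniqueness.
-/

open Function Set
open scoped Topology

section Continuation

theorem surjective_add_comp_of_norm_sub_lt
    {𝕜 V X Y : Type*} [NontriviallyNormedField 𝕜] [AddCommGroup V] [Module 𝕜 V]
    [NormedAddCommGroup X] [NormedSpace 𝕜 X] [CompleteSpace X]
    [NormedAddCommGroup Y] [NormedSpace 𝕜 Y]
    {ι : V →ₗ[𝕜] X} {L : V →ₗ[𝕜] Y} {B C : X →L[𝕜] Y} {γ : ℝ}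
    (hbelow : ∀ u, γ * ‖ι u‖ ≤ ‖L u + B (ι u)‖) (hCB : ‖C - B‖ < γ)
    (hB : Surjective fun u ↦ L u + B (ι u)) :
    Surjective fun u ↦ L u + C (ι u) := by
  intro F
  have hγ : 0 < γ := (norm_nonneg _).trans_lt hCB
  choose S hS using fun x ↦ hB (F - (C - B) x)
  have hdiff (x y : X) : L (S x - S y) + B (ι (S x - S y)) = -(C - B) (x - y) := by
    calc L (S x - S y) + B (ι (S x - S y))
        = (L (S x) + B (ι (S x))) - (L (S y) + B (ι (S y))) := by simp only [map_sub]; abel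
      _ = (F - (C - B) x) - (F - (C - B) y) := congrArg₂ (· - ·) (hS x) (hS y)
      _ = -(C - B) (x - y) := by rw [map_sub]; abel
  have hcontr : ContractingWith (‖C - B‖₊ / ⟨γ, hγ.le⟩) fun x ↦ ι (S x) := by
    refine ⟨(div_lt_one hγ).2 hCB, LipschitzWith.of_dist_le_mul fun x y ↦ ?_⟩
    have hle : γ * ‖ι (S x - S y)‖ ≤ ‖C - B‖ * ‖x - y‖ :=
      calc γ * ‖ι (S x - S y)‖ ≤ ‖L (S x - S y) + B (ι (S x - S y))‖ := hbelow _
        _ = ‖(C - B) (x - y)‖ := by rw [hdiff, norm_neg]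
        _ ≤ ‖C - B‖ * ‖x - y‖ := (C - B).le_opNorm _
    rw [dist_eq_norm, dist_eq_norm, ← map_sub]
    change _ ≤ ‖C - B‖ / γ * _
    rwa [div_mul_eq_mul_div, le_div_iff₀' hγ]
  have hfix : ι (S (hcontr.fixedPoint _)) = hcontr.fixedPoint _ := hcontr.fixedPoint_isFixedPt
  set x := hcontr.fixedPoint _
  refine ⟨S x, ?_⟩
  have hSx : L (S x) + B x = F - (C - B) x := by simpa only [hfix] using hS x
  calc L (S x) + C (ι (S x)) = (L (S x) + B x) + (C - B) x := by
        rw [hfix, sub_apply]; abel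
    _ = F := by rw [hSx, sub_add_cancel]

theorem surjective_add_comp_of_lineMap
    {V X Y : Type*} [AddCommGroup V] [Module ℝ V]
    [NormedAddCommGroup X] [NormedSpace ℝ X] [CompleteSpace X]
    [NormedAddCommGroup Y] [NormedSpace ℝ Y]
    {ι : V →ₗ[ℝ] X} {L : V →ₗ[ℝ] Y} {B₀ B₁ : X →L[ℝ] Y} {γ : ℝ} (hγ : 0 < γ)
    (hbelow : ∀ t ∈ Icc (0 : ℝ) 1, ∀ u,
      γ * ‖ι u‖ ≤ ‖L u + AffineMap.lineMap B₀ B₁ t (ι u)‖)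
    (hB₀ : Surjective fun u ↦ L u + B₀ (ι u)) :
    Surjective fun u ↦ L u + B₁ (ι u) := by
  let B (t : ℝ) : X →L[ℝ] Y := AffineMap.lineMap B₀ B₁ t
  have hlocal (t : ℝ) : ∀ᶠ s in 𝓝 t, ‖B s - B t‖ < γ := by
    have hB : Continuous B := AffineMap.lineMap_continuous
    simpa only [dist_eq_norm] using hB.continuousAt.eventually (Metric.ball_mem_nhds (B t) hγ)
  have hconn : Surjective (fun u ↦ L u + B 0 (ι u)) → Surjective (fun u ↦ L u + B 1 (ι u)) := by
    refine isPreconnected_Icc.induction₂'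
      (fun s t ↦ Surjective (fun u ↦ L u + B s (ι u)) → Surjective (fun u ↦ L u + B t (ι u)))
      (fun t ht ↦ ?_) (fun _ _ _ _ _ _ hst htr ↦ htr ∘ hst)
      (left_mem_Icc.2 zero_le_one) (right_mem_Icc.2 zero_le_one)
    filter_upwards [nhdsWithin_le_nhds (hlocal t), self_mem_nhdsWithin] with s hst hs
    exact ⟨surjective_add_comp_of_norm_sub_lt (hbelow t ht) hst,
      surjective_add_comp_of_norm_sub_lt (hbelow s hs) (by rwa [norm_sub_rev])⟩
  simpa only [B, AffineMap.lineMap_apply_zero, AffineMap.lineMap_apply_one, hB₀, forall_const]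
    using hconn

end Continuation

section Coercive

theorem exists_forall_le_lineMap_of_isCoercive
    {X : Type*} [NormedAddCommGroup X] [NormedSpace ℝ X] {B₀ B₁ : X →L[ℝ] X →L[ℝ] ℝ}
    (hB₀ : IsCoercive B₀) (hB₁ : IsCoercive B₁) :
    ∃ γ, 0 < γ ∧ ∀ t ∈ Icc (0 : ℝ) 1, ∀ x, γ * ‖x‖ ^ 2 ≤ AffineMap.lineMap B₀ B₁ t x x := by
  obtain ⟨γ₀, hγ₀, h₀⟩ := hB₀
  obtain ⟨γ₁, hγ₁, h₁⟩ := hB₁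
  refine ⟨min γ₀ γ₁, lt_min hγ₀ hγ₁, fun t ht x ↦ ?_⟩
  have hmin₀ : min γ₀ γ₁ * ‖x‖ ^ 2 ≤ B₀ x x :=
    calc min γ₀ γ₁ * ‖x‖ ^ 2 ≤ γ₀ * ‖x‖ ^ 2 := by gcongr; exact min_le_left _ _
      _ = γ₀ * ‖x‖ * ‖x‖ := by ring
      _ ≤ B₀ x x := h₀ x
  have hmin₁ : min γ₀ γ₁ * ‖x‖ ^ 2 ≤ B₁ x x :=
    calc min γ₀ γ₁ * ‖x‖ ^ 2 ≤ γ₁ * ‖x‖ ^ 2 := by gcongr; exact min_le_right _ _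
      _ = γ₁ * ‖x‖ * ‖x‖ := by ring
      _ ≤ B₁ x x := h₁ x
  calc min γ₀ γ₁ * ‖x‖ ^ 2
      = (1 - t) * (min γ₀ γ₁ * ‖x‖ ^ 2) + t * (min γ₀ γ₁ * ‖x‖ ^ 2) := by ring
    _ ≤ (1 - t) * B₀ x x + t * B₁ x x :=
        add_le_add (mul_le_mul_of_nonneg_left hmin₀ (sub_nonneg.2 ht.2))
          (mul_le_mul_of_nonneg_left hmin₁ ht.1)
    _ = AffineMap.lineMap B₀ B₁ t x x := by simp [AffineMap.lineMap_apply_module]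

variable {V X : Type*} [AddCommGroup V] [Module ℝ V] [NormedAddCommGroup X] [NormedSpace ℝ X]
  {ι : V →ₗ[ℝ] X} {D : V →ₗ[ℝ] X →L[ℝ] ℝ} {B B₀ B₁ : X →L[ℝ] X →L[ℝ] ℝ} {γ Γ : ℝ}

theorem mul_norm_le_norm_add_of_coercive (hD : ∀ u, 0 ≤ D u (ι u))
    (hB : ∀ x, γ * ‖x‖ ^ 2 ≤ B x x) (u : V) :
    γ * ‖ι u‖ ≤ ‖D u + B (ι u)‖ := by
  have htest : γ * ‖ι u‖ * ‖ι u‖ ≤ ‖D u + B (ι u)‖ * ‖ι u‖ :=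
    calc γ * ‖ι u‖ * ‖ι u‖ ≤ D u (ι u) + B (ι u) (ι u) := by linarith [hD u, hB (ι u)]
      _ ≤ ‖D u + B (ι u)‖ * ‖ι u‖ := (le_abs_self _).trans ((D u + B (ι u)).le_opNorm _)
  rcases (norm_nonneg (ι u)).eq_or_lt with hzero | hpos
  · rw [← hzero, mul_zero]
    exact norm_nonneg _
  · exact le_of_mul_le_mul_right htest hpos

theorem surjective_add_comp_of_isCoercive [CompleteSpace X] (hD : ∀ u, 0 ≤ D u (ι u))
    (hB₀ : IsCoercive B₀) (hB₁ : IsCoercive B₁) (hsurj : Surjective fun u ↦ D u + B₀ (ι u)) :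
    Surjective fun u ↦ D u + B₁ (ι u) := by
  obtain ⟨γ, hγ, hcoercive⟩ := exists_forall_le_lineMap_of_isCoercive hB₀ hB₁
  exact surjective_add_comp_of_lineMap hγ
    (fun t ht ↦ mul_norm_le_norm_add_of_coercive hD (hcoercive t ht)) hsurj

theorem sqrt_norm_sq_add_norm_sq_le_of_coercive (hD : ∀ u, 0 ≤ D u (ι u)) (hγ : 0 < γ)
    (hB : ∀ x, γ * ‖x‖ ^ 2 ≤ B x x) (hBΓ : ‖B‖ ≤ Γ) (u : V) :
    √(‖ι u‖ ^ 2 + ‖D u‖ ^ 2) ≤ √(1 + (γ + Γ) ^ 2) / γ * ‖D u + B (ι u)‖ := by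
  set F := D u + B (ι u) with hF
  have hι : γ * ‖ι u‖ ≤ ‖F‖ := mul_norm_le_norm_add_of_coercive hD hB u
  have hDu : γ * ‖D u‖ ≤ (γ + Γ) * ‖F‖ :=
    calc γ * ‖D u‖ = γ * ‖F - B (ι u)‖ := by rw [hF, add_sub_cancel_right]
      _ ≤ γ * (‖F‖ + Γ * ‖ι u‖) := by
          gcongr
          exact (norm_sub_le _ _).trans (by gcongr; exact B.le_of_opNorm_le hBΓ _)
      _ = γ * ‖F‖ + Γ * (γ * ‖ι u‖) := by ring
      _ ≤ γ * ‖F‖ + Γ * ‖F‖ := by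
          gcongr
          exact (norm_nonneg B).trans hBΓ
      _ = (γ + Γ) * ‖F‖ := by ring
  rw [div_mul_eq_mul_div, le_div_iff₀' hγ]
  calc γ * √(‖ι u‖ ^ 2 + ‖D u‖ ^ 2) = √((γ * ‖ι u‖) ^ 2 + (γ * ‖D u‖) ^ 2) := by
        rw [mul_pow, mul_pow, ← mul_add, Real.sqrt_mul (sq_nonneg γ), Real.sqrt_sq hγ.le]
    _ ≤ √(‖F‖ ^ 2 + ((γ + Γ) * ‖F‖) ^ 2) := by gcongr
    _ = √(1 + (γ + Γ) ^ 2) * ‖F‖ := by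
        rw [mul_pow, ← one_add_mul, Real.sqrt_mul (by positivity), Real.sqrt_sq (norm_nonneg F)]

end Coercive

theorem sqrt_one_add_sq_div_le_inv {γ Γ : ℝ} (hγ : 0 < γ) (hγΓ : γ ≤ Γ) :
    √(1 + (γ + Γ) ^ 2) / γ ≤ (√2 * γ / (2 * (1 + Γ ^ 2)))⁻¹ := by
  have hconst : (√2 * γ / (2 * (1 + Γ ^ 2)))⁻¹ = √2 * (1 + Γ ^ 2) / γ := by
    rw [inv_div, div_eq_div_iff (by positivity) hγ.ne']
    linear_combination -(1 + Γ ^ 2) * γ * Real.mul_self_sqrt zero_le_two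
  have hsq : 1 + (γ + Γ) ^ 2 ≤ 2 * (1 + Γ ^ 2) ^ 2 := by
    have hΓ : 0 < Γ := hγ.trans_le hγΓ
    calc 1 + (γ + Γ) ^ 2 ≤ 1 + (Γ + Γ) ^ 2 := by gcongr
      _ ≤ 2 * (1 + Γ ^ 2) ^ 2 := by nlinarith [sq_nonneg (Γ ^ 2)]
  rw [hconst]
  gcongr
  calc √(1 + (γ + Γ) ^ 2) ≤ √(2 * (1 + Γ ^ 2) ^ 2) := Real.sqrt_le_sqrt hsq
    _ = √2 * (1 + Γ ^ 2) := by rw [Real.sqrt_mul zero_le_two, Real.sqrt_sq (by positivity)]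

section InnerProduct

variable {X : Type*} [NormedAddCommGroup X] [InnerProductSpace ℝ X]

theorem isCoercive_smul_innerSL {μ : ℝ} (hμ : 0 < μ) :
    IsCoercive (μ • innerSL ℝ : X →L[ℝ] X →L[ℝ] ℝ) :=
  ⟨μ, hμ, fun x ↦ by
    rw [mul_assoc, ← real_inner_self_eq_norm_mul_norm]
    exact le_rfl⟩

theorem surjective_add_smul_innerSL [CompleteSpace X] {V : Type*} {ι : V → X}
    {D : V → X →L[ℝ] ℝ} {μ : ℝ} (hμ : μ ≠ 0)
    (haux : ∀ x : X, ∃ z : V, ∀ w : X, D z w + μ * ⟪ι z, w⟫_ℝ = μ * ⟪x, w⟫_ℝ) :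
    Surjective fun u ↦ D u + (μ • innerSL ℝ : X →L[ℝ] X →L[ℝ] ℝ) (ι u) := by
  intro F
  obtain ⟨z, hz⟩ := haux (μ⁻¹ • (InnerProductSpace.toDual ℝ X).symm F)
  refine ⟨z, ContinuousLinearMap.ext fun w ↦ ?_⟩
  calc D z w + μ * ⟪ι z, w⟫_ℝ = μ * ⟪μ⁻¹ • (InnerProductSpace.toDual ℝ X).symm F, w⟫_ℝ := hz w
    _ = F w := by
        rw [real_inner_smul_left, InnerProductSpace.toDual_symm_apply, mul_inv_cancel_left₀ hμ]

end InnerProduct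

theorem wellposedness_symmetric_general
    {X : Type*} [NormedAddCommGroup X] [InnerProductSpace ℝ X] [CompleteSpace X]
    {V : Type*} [NormedAddCommGroup V] [NormedSpace ℝ V]
    (ι : V →ₗ[ℝ] X) (D : V →ₗ[ℝ] (X →L[ℝ] ℝ))
    (hnormV : ∀ u : V, ‖u‖ = √(‖ι u‖ ^ 2 + ‖D u‖ ^ 2))
    (γ Γ μ : ℝ) (hγ : 0 < γ) (hγΓ : γ ≤ Γ) (hμ : 0 < μ)
    (A : X →ₗ[ℝ] X →ₗ[ℝ] ℝ)
    (hAbdd : ∀ x y : X, |A x y| ≤ Γ * ‖x‖ * ‖y‖)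
    (hAell : ∀ x : X, γ * ‖x‖ ^ 2 ≤ A x x)
    (hDpos : ∀ u : V, 0 ≤ D u (ι u))
    (haux : ∀ x : X, ∃ z : V, ∀ w : X, D z w + μ * ⟪ι z, w⟫_ℝ = μ * ⟪x, w⟫_ℝ)
    (F : X →L[ℝ] ℝ) :
    ∃ u : V,
      (∀ v : X, D u v + A (ι u) v = F v) ∧
      ‖u‖ ≤ (√2 * γ / (2 * (1 + Γ ^ 2)))⁻¹ * ‖F‖ ∧
      (∀ u' : V, (∀ v : X, D u' v + A (ι u') v = F v) → u' = u) := by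
  let B : X →L[ℝ] X →L[ℝ] ℝ := A.mkContinuous₂ Γ hAbdd
  have hB : IsCoercive B := ⟨γ, hγ, fun x ↦ by
    rw [mul_assoc, ← sq]
    exact hAell x⟩
  have hestimate (u : V) : ‖u‖ ≤ (√2 * γ / (2 * (1 + Γ ^ 2)))⁻¹ * ‖D u + B (ι u)‖ := by
    rw [hnormV]
    refine (sqrt_norm_sq_add_norm_sq_le_of_coercive hDpos hγ hAell
      (A.mkContinuous₂_norm_le (hγ.le.trans hγΓ) hAbdd) u).trans ?_
    gcongr
    exact sqrt_one_add_sq_div_le_inv hγ hγΓ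
  obtain ⟨u, hu⟩ := surjective_add_comp_of_isCoercive hDpos (isCoercive_smul_innerSL hμ) hB
    (surjective_add_smul_innerSL hμ.ne' haux) F
  refine ⟨u, fun v ↦ DFunLike.congr_fun hu v, hu ▸ hestimate u, fun u' hu' ↦ ?_⟩
  have hu'F : D u' + B (ι u') = F := ContinuousLinearMap.ext hu'
  have hdiff : D (u' - u) + B (ι (u' - u)) = 0 := by
    simp only [map_sub]
    rw [sub_add_sub_comm, hu'F, sub_eq_zero]
    exact hu.symm
  rw [← sub_eq_zero, ← norm_le_zero_iff]
  simpa only [hdiff, norm_zero, mul_zero] using hestimate (u' - u)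

/-- Abstract form of Theorem 3.6: well-posedness of `b(u,v) = F(v)` for a symmetric
bilinear form, with the a priori estimate `‖u‖_V ≤ c_s⁻¹ ‖F‖_{X'}`,
`c_s = √2·γ / (2·(1 + Γ²))`. -/
theorem wellposedness_symmetric
    {X : Type*} [NormedAddCommGroup X] [InnerProductSpace ℝ X] [CompleteSpace X]
    {V : Type*} [NormedAddCommGroup V] [NormedSpace ℝ V] [CompleteSpace V]
    (ι : V →ₗ[ℝ] X) (hι : Function.Injective ι)
    (D : V →ₗ[ℝ] (X →L[ℝ] ℝ))
    (hnormV : ∀ u : V, ‖u‖ = Real.sqrt (‖ι u‖ ^ 2 + ‖D u‖ ^ 2))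
    (γ Γ : ℝ) (hγ : 0 < γ) (hγΓ : γ ≤ Γ)
    (A : X →ₗ[ℝ] X →ₗ[ℝ] ℝ)
    (hAbdd : ∀ x y : X, |A x y| ≤ Γ * ‖x‖ * ‖y‖)
    (hAell : ∀ x : X, γ * ‖x‖ ^ 2 ≤ A x x)
    (hAsymm : ∀ x y : X, A x y = A y x)
    (hDpos : ∀ u : V, 0 ≤ D u (ι u))
    (haux : ∀ x : X, ∃ z : V,
      ∀ w : X, D z w + Γ * ⟪ι z, w⟫_ℝ = Γ * ⟪x, w⟫_ℝ) :
    ∀ F : X →L[ℝ] ℝ, ∃ u : V,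
      (∀ v : X, D u v + A (ι u) v = F v) ∧
      ‖u‖ ≤ (Real.sqrt 2 * γ / (2 * (1 + Γ ^ 2)))⁻¹ * ‖F‖ ∧
      (∀ u' : V, (∀ v : X, D u' v + A (ι u') v = F v) → u' = u) := by
  exact wellposedness_symmetric_general ι D hnormV γ Γ Γ hγ hγΓ (hγ.trans_le hγΓ) A hAbdd hAell
    hDpos haux
end

section
/- (Perturbation of a coercive isomorphism by an antisymmetric operator; the core of the proof of Theorem 3.8.) Let B : V → X' be a bounded linear bijection satisfying ⟨B u, ι u⟩ ≥ γ ‖ι u‖_X² for all u ∈ V, and let C : X → X' be a bounded linear map satisfying ⟨C x, x⟩ = 0 for all x ∈ X. Then the bounded linear map u ↦ B u + C(ι u) from V to X' is a bijection, and for every F ∈ X' the unique u ∈ V with B u + C(ι u) = F satisfies ‖ι u‖_X ≤ γ⁻¹ ‖F‖_{X'}. -/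
/-!
Along the path `B + t C ι`, `0 ≤ t ≤ 1`, coercivity persists because `C` contributes nothing
negative to the quadratic form, so `γ ‖ι u‖ ≤ ‖B u + t C (ι u)‖` uniformly in `t`. Hence `C ι` is
bounded relative to every operator of the path with one and the same constant, and a Neumann series
on `X'` carries bijectivity over a step in `t` of fixed length; finitely many such steps lead from
`B` to `B + C ι`.
-/

open Function

section Bijectivity

variable {V : Type*} [AddCommGroup V]
variable {Y : Type*} [NormedAddCommGroup Y] [CompleteSpace Y]

theorem bijective_one_add_of_norm_lt_one {𝕜 : Type*} [NontriviallyNormedField 𝕜]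
    [NormedSpace 𝕜 Y] {T : Y →L[𝕜] Y} (hT : ‖T‖ < 1) : Bijective ⇑(1 + T) := by
  have hunit : IsUnit (1 + T) := by
    simpa using isUnit_one_sub_of_norm_lt_one (x := -T) (by rwa [norm_neg])
  exact ContinuousLinearMap.isUnit_iff_bijective.mp hunit

theorem bijective_add_of_norm_le_mul_norm {𝕜 : Type*} [NontriviallyNormedField 𝕜] [Module 𝕜 V]
    [NormedSpace 𝕜 Y] {A S : V →ₗ[𝕜] Y} (hA : Bijective A) {c : ℝ} (hc : c < 1)
    (hS : ∀ u, ‖S u‖ ≤ c * ‖A u‖) : Bijective (A + S) := by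
  let e : V ≃ₗ[𝕜] Y := .ofBijective A hA
  have hbound (y : Y) : ‖(S ∘ₗ e.symm) y‖ ≤ c * ‖y‖ := by
    simpa [e] using hS (e.symm y)
  let T : Y →L[𝕜] Y := (S ∘ₗ e.symm).mkContinuous c hbound
  have hT : ‖T‖ < 1 :=
    (LinearMap.mkContinuous_norm_le' _ hbound).trans_lt (max_lt hc one_pos)
  have hfactor : ⇑(A + S) = ⇑(1 + T) ∘ e := by
    ext u
    simp [T, e]
  rw [hfactor]
  exact (bijective_one_add_of_norm_lt_one hT).comp e.bijective

theorem bijective_add_of_forall_norm_le_mul_norm_add_smul [Module ℝ V] [NormedSpace ℝ Y]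
    {A S : V →ₗ[ℝ] Y} (hA : Bijective A) {M : ℝ}
    (hS : ∀ t ∈ Set.Icc (0 : ℝ) 1, ∀ u, ‖S u‖ ≤ M * ‖A u + t • S u‖) : Bijective (A + S) := by
  obtain ⟨N, hN⟩ := exists_nat_gt (max M 0)
  obtain ⟨hMN, hN0⟩ := max_lt_iff.mp hN
  have hpath (n : ℕ) (hn : n ≤ N) : Bijective (A + (n / N : ℝ) • S) := by
    induction n with
    | zero => simpa using hA
    | succ n ih =>
      have ht : (n / N : ℝ) ∈ Set.Icc (0 : ℝ) 1 :=
        ⟨by positivity, div_le_one_of_le₀ (by exact_mod_cast (by omega : n ≤ N)) hN0.le⟩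
      have hrel (u : V) : ‖((N : ℝ)⁻¹ • S) u‖ ≤ M / N * ‖(A + (n / N : ℝ) • S) u‖ := by
        calc ‖((N : ℝ)⁻¹ • S) u‖ = (N : ℝ)⁻¹ * ‖S u‖ := by simp [norm_smul]
          _ ≤ (N : ℝ)⁻¹ * (M * ‖A u + (n / N : ℝ) • S u‖) := by gcongr; exact hS _ ht u
          _ = M / N * ‖(A + (n / N : ℝ) • S) u‖ := by
            rw [LinearMap.add_apply, LinearMap.smul_apply]; ring
      have hstep := bijective_add_of_norm_le_mul_norm (ih (by omega))
        ((div_lt_one hN0).mpr hMN) hrel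
      rwa [add_assoc, ← add_smul, inv_eq_one_div, ← add_div, ← Nat.cast_succ] at hstep
  simpa [div_self hN0.ne'] using hpath N le_rfl

end Bijectivity

theorem mul_norm_le_norm_of_mul_norm_sq_le_apply {X : Type*} [SeminormedAddCommGroup X]
    [NormedSpace ℝ X] {γ : ℝ} {x : X} {f : X →L[ℝ] ℝ} (h : γ * ‖x‖ ^ 2 ≤ f x) : γ * ‖x‖ ≤ ‖f‖ := by
  rcases (norm_nonneg x).eq_or_lt with hx | hx
  · simp [← hx]
  · refine le_of_mul_le_mul_right ?_ hx
    calc γ * ‖x‖ * ‖x‖ = γ * ‖x‖ ^ 2 := by ring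
      _ ≤ f x := h
      _ ≤ ‖f x‖ := Real.le_norm_self _
      _ ≤ ‖f‖ * ‖x‖ := f.le_opNorm x

theorem perturbation_antisymmetric_general
    {X : Type*} [NormedAddCommGroup X] [NormedSpace ℝ X]
    {V : Type*} [AddCommGroup V] [Module ℝ V]
    (ι : V →ₗ[ℝ] X) (γ : ℝ) (hγ : 0 < γ) (B : V →ₗ[ℝ] (X →L[ℝ] ℝ)) (hB : Bijective B)
    (hBcoer : ∀ u : V, γ * ‖ι u‖ ^ 2 ≤ B u (ι u))
    (C : X →L[ℝ] (X →L[ℝ] ℝ)) (hC : ∀ u : V, 0 ≤ C (ι u) (ι u)) :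
    Bijective (fun u : V => B u + C (ι u)) ∧
      ∀ (F : X →L[ℝ] ℝ) (u : V), B u + C (ι u) = F → ‖ι u‖ ≤ γ⁻¹ * ‖F‖ := by
  have hbound (t : ℝ) (ht : 0 ≤ t) (u : V) : ‖ι u‖ ≤ γ⁻¹ * ‖B u + t • C (ι u)‖ := by
    have hcoer : γ * ‖ι u‖ ^ 2 ≤ (B u + t • C (ι u)) (ι u) :=
      (hBcoer u).trans (le_add_of_nonneg_right (mul_nonneg ht (hC u)))
    exact (le_inv_mul_iff₀ hγ).mpr (mul_norm_le_norm_of_mul_norm_sq_le_apply hcoer)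
  have hrel : ∀ t ∈ Set.Icc (0 : ℝ) 1, ∀ u,
      ‖(C.toLinearMap ∘ₗ ι) u‖ ≤ ‖C‖ * γ⁻¹ * ‖B u + t • (C.toLinearMap ∘ₗ ι) u‖ := by
    intro t ht u
    calc ‖C (ι u)‖ ≤ ‖C‖ * ‖ι u‖ := C.le_opNorm _
      _ ≤ ‖C‖ * (γ⁻¹ * ‖B u + t • C (ι u)‖) := by gcongr; exact hbound t ht.1 u
      _ = ‖C‖ * γ⁻¹ * ‖B u + t • C (ι u)‖ := (mul_assoc ..).symm
  constructor
  · exact bijective_add_of_forall_norm_le_mul_norm_add_smul hB hrel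
  · rintro _ u rfl
    simpa using hbound 1 zero_le_one u

/-- Perturbation of a coercive isomorphism by an antisymmetric operator (the core of
the proof of Theorem 3.8): if `B : V → X'` is a bounded linear bijection with
`⟨B u, ι u⟩ ≥ γ ‖ι u‖²` and `C : X → X'` is bounded linear with `⟨C x, x⟩ = 0`, then
`u ↦ B u + C (ι u)` is a bijection and any solution `u` of `B u + C (ι u) = F`
satisfies `‖ι u‖ ≤ γ⁻¹ ‖F‖`. -/
theorem perturbation_antisymmetric
    {X : Type*} [NormedAddCommGroup X] [InnerProductSpace ℝ X] [CompleteSpace X]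
    {V : Type*} [NormedAddCommGroup V] [NormedSpace ℝ V] [CompleteSpace V]
    (ι : V →L[ℝ] X) (γ : ℝ) (hγ : 0 < γ)
    (B : V →L[ℝ] (X →L[ℝ] ℝ)) (hBbij : Function.Bijective B)
    (hBcoer : ∀ u : V, γ * ‖ι u‖ ^ 2 ≤ B u (ι u))
    (C : X →L[ℝ] (X →L[ℝ] ℝ)) (hC : ∀ x : X, C x x = 0) :
    Function.Bijective (fun u : V => B u + C (ι u)) ∧
      ∀ (F : X →L[ℝ] ℝ) (u : V), B u + C (ι u) = F → ‖ι u‖ ≤ γ⁻¹ * ‖F‖ :=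
  perturbation_antisymmetric_general ι.toLinearMap γ hγ B.toLinearMap hBbij hBcoer C fun u =>
    (hC (ι u)).ge
end
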